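/- arXiv:1902.06817 — 3 statements merged into one kernel-verified Lean document; each statement's English description precedes it below -/
import Mathlib

section
/- Let r ≥ 2 and let a_1, …, a_r be integers with a_i ≥ 2 for all i, and let A be the real adjacency matrix of G(a_1,…,a_r). Then for every i with 1 ≤ i ≤ r−1, the dimension of ker(A + x_r^i·I) equals a_1·a_2·⋯·a_{i−1}·(a_i − 1) (where the empty product for i = 1 is 1); that is, −x_r^i is an eigenvalue of G(a_1,…,a_r) with multiplicity exactly a_1 ⋯ a_{i−1}(a_i − 1). -/
/-- The cograph with balanced cotree `T_G(a_1,…,a_{r-1},0|0,…,0,a_r)`: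
vertices are tuples `(v_1,…,v_r)` with `v_i ∈ {1,…,a_i}` (here indexed by `Fin r`,
coordinate `i : Fin r` corresponding to paper index `i+1`), two distinct tuples
being adjacent iff the least 1-based index at which they differ is odd
(equivalently, the least 0-based index is even). -/
def balG (r : ℕ) (a : ℕ → ℕ) :
    SimpleGraph ((i : Fin r) → Fin (a ((i : ℕ) + 1))) :=
  SimpleGraph.fromRel (fun u v => ∃ i : Fin r,
    u i ≠ v i ∧ Even (i : ℕ) ∧ ∀ j : Fin r, (j : ℕ) < (i : ℕ) → u j = v j)

open scoped Classical in
/-- The real adjacency matrix of `balG r a`. -/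
noncomputable def adjMat (r : ℕ) (a : ℕ → ℕ) :
    Matrix ((i : Fin r) → Fin (a ((i : ℕ) + 1))) ((i : Fin r) → Fin (a ((i : ℕ) + 1))) ℝ :=
  Matrix.of fun u v => if (balG r a).Adj u v then 1 else 0


/-- `gam a n l` is the product `a n * a (n-1) * ⋯ * a l`, i.e. γ_{n,l}, as an integer. -/
def gam (a : ℕ → ℕ) (n l : ℕ) : ℤ := ∏ k ∈ Finset.Icc l n, (a k : ℤ)

/-- The integer `x_r^i`: it equals `∑_{k=1}^{r-i} γ_{r,i+k} (-1)^k` when `i` is even and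
`∑_{k=1}^{r-i} γ_{r,i+k} (-1)^(k+1)` when `i` is odd, plus `1` exactly when `r` is odd. -/
def xri (a : ℕ → ℕ) (r i : ℕ) : ℤ :=
  (∑ k ∈ Finset.Icc 1 (r - i), gam a r (i + k) * (-1) ^ (if Even i then k else k + 1))
    + (if Odd r then 1 else 0)

open Matrix in
/-- Kernel of a combination of orthogonal idempotents coming from a chain of projections. -/
theorem ker_chain {V : Type*} [Fintype V] [DecidableEq V] (r : ℕ) (P : ℕ → Matrix V V ℝ)
    (hmul : ∀ k l, k ≤ r + 1 → l ≤ r + 1 → P k * P l = P (min k l)) (h0 : P 0 = 0)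
    (h1 : P (r + 1) = 1) (c : ℕ → ℝ) (M : Matrix V V ℝ)
    (hM : M = ∑ k ∈ Finset.range (r + 1), c k • P (k + 1)) (i : ℕ) (hi : i ≤ r)
    (hs0 : ∑ k ∈ Finset.Ico i (r + 1), c k = 0)
    (hs : ∀ j ≤ r, j ≠ i → ∑ k ∈ Finset.Ico j (r + 1), c k ≠ 0) :
    (Module.finrank ℝ (LinearMap.ker (Matrix.toLin' M)) : ℝ) =
      (P (i + 1)).trace - (P i).trace := by
  set Q : ℕ → Matrix V V ℝ := fun j => P (j + 1) - P j with hQ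
  have hQP : ∀ j ≤ r, ∀ k ≤ r, Q j * P (k + 1) = if j ≤ k then Q j else 0 := by
    intro j hj k hk
    simp only [hQ, sub_mul]
    rw [hmul _ _ (by omega) (by omega), hmul _ _ (by omega) (by omega)]
    split_ifs with h
    · rw [min_eq_left (by omega), min_eq_left (by omega)]
    · rw [min_eq_right (by omega), min_eq_right (by omega), sub_self]
  have hPQ : ∀ j ≤ r, ∀ k ≤ r, P (k + 1) * Q j = if j ≤ k then Q j else 0 := by
    intro j hj k hk
    simp only [hQ, mul_sub]
    rw [hmul _ _ (by omega) (by omega), hmul _ _ (by omega) (by omega)]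
    split_ifs with h
    · rw [min_eq_right (by omega), min_eq_right (by omega)]
    · rw [min_eq_left (by omega), min_eq_left (by omega), sub_self]
  have hsum : ∀ j ≤ r, ∑ k ∈ Finset.range (r + 1), (if j ≤ k then c k else 0) =
      ∑ k ∈ Finset.Ico j (r + 1), c k := by
    intro j hj
    rw [← Finset.sum_filter]
    congr 1
    ext k
    simp
    omega
  have hQM : ∀ j ≤ r, Q j * M = (∑ k ∈ Finset.Ico j (r + 1), c k) • Q j := by
    intro j hj
    rw [hM, Finset.mul_sum, ← hsum j hj, Finset.sum_smul]
    refine Finset.sum_congr rfl fun k hk => ?_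
    rw [Matrix.mul_smul, hQP j hj k (by simpa [Nat.lt_succ_iff] using hk)]
    split_ifs <;> simp
  have hMQ : ∀ j ≤ r, M * Q j = (∑ k ∈ Finset.Ico j (r + 1), c k) • Q j := by
    intro j hj
    rw [hM, Finset.sum_mul, ← hsum j hj, Finset.sum_smul]
    refine Finset.sum_congr rfl fun k hk => ?_
    rw [Matrix.smul_mul, hPQ j hj k (by simpa [Nat.lt_succ_iff] using hk)]
    split_ifs <;> simp
  have hQ1 : ∑ j ∈ Finset.range (r + 1), Q j = 1 := by
    simp only [hQ]
    rw [Finset.sum_range_sub, h0, h1, sub_zero]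
  have hQQ : Q i * Q i = Q i := by
    have e : Q i * Q i = Q i * P (i + 1) - Q i * P i := by rw [← mul_sub]
    rw [e, hQP i hi i hi, if_pos le_rfl]
    rcases Nat.eq_zero_or_pos i with h | h
    · subst h; simp [h0]
    · obtain ⟨m, rfl⟩ : ∃ m, i = m + 1 := ⟨i - 1, by omega⟩
      rw [hQP (m + 1) hi m (by omega), if_neg (by omega), sub_zero]
  have hproj : LinearMap.IsProj (LinearMap.ker (Matrix.toLin' M)) (Matrix.toLin' (Q i)) := by
    constructor
    · intro v
      rw [LinearMap.mem_ker, Matrix.toLin'_apply, Matrix.toLin'_apply, Matrix.mulVec_mulVec,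
        hMQ i hi, hs0]
      simp
    · intro v hv
      rw [LinearMap.mem_ker, Matrix.toLin'_apply] at hv
      rw [Matrix.toLin'_apply]
      have hz : ∀ j ≤ r, j ≠ i → Q j *ᵥ v = 0 := by
        intro j hj hji
        have : (Q j * M) *ᵥ v = 0 := by rw [← Matrix.mulVec_mulVec, hv, Matrix.mulVec_zero]
        rw [hQM j hj, Matrix.smul_mulVec] at this
        exact (smul_eq_zero.mp this).resolve_left (hs j hj hji)
      have : (∑ j ∈ Finset.range (r + 1), Q j) *ᵥ v = v := by rw [hQ1, Matrix.one_mulVec]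
      rw [Matrix.sum_mulVec, Finset.sum_eq_single i] at this
      · exact this
      · intro j hj hji
        exact hz j (by simpa [Nat.lt_succ_iff] using hj) hji
      · intro h
        simp at h
        omega
  have ht := hproj.trace
  rw [Matrix.trace_toLin'_eq] at ht
  rw [← ht]
  simp [hQ, Matrix.trace_sub]

theorem gam_step (a : ℕ → ℕ) (r k : ℕ) (hk : k < r) :
    gam a r (k + 1) = a (k + 1) * gam a r (k + 2) := by
  unfold gam
  rw [← Finset.mul_prod_Ioc_eq_prod_Icc (by omega : k + 1 ≤ r)]
  congr 1
  refine Finset.prod_congr ?_ fun _ _ => rfl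
  ext x
  simp
  omega

theorem gam_pos (a : ℕ → ℕ) (ha : ∀ k, 2 ≤ a k) (r k : ℕ) : 0 < gam a r k := by
  unfold gam
  refine Finset.prod_pos fun j _ => ?_
  have := ha j
  omega

theorem alt_bound (g : ℕ → ℝ) (r : ℕ) (hpos : ∀ k, 0 < g k) (hlt : ∀ k < r, g (k + 1) < g k)
    (n : ℕ) : ∀ i, i + n ≤ r →
      0 ≤ (-1) ^ i * ∑ k ∈ Finset.Ico i (i + n), (-1) ^ k * g k ∧
      (-1) ^ i * ∑ k ∈ Finset.Ico i (i + n), (-1) ^ k * g k ≤ g i ∧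
      (0 < n → 0 < (-1) ^ i * ∑ k ∈ Finset.Ico i (i + n), (-1) ^ k * g k) := by
  induction n with
  | zero => intro i _; simp [(hpos i).le]
  | succ n ih =>
    intro i hi
    obtain ⟨h1, h2, h3⟩ := ih (i + 1) (by omega)
    have e : (-1 : ℝ) ^ i * ∑ k ∈ Finset.Ico i (i + (n + 1)), (-1) ^ k * g k =
        g i - (-1) ^ (i + 1) * ∑ k ∈ Finset.Ico (i + 1) (i + 1 + n), (-1) ^ k * g k := by
      rw [Finset.sum_eq_sum_Ico_succ_bot (by omega), mul_add, ← mul_assoc, ← mul_pow,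
        show i + (n + 1) = i + 1 + n by ring]
      simp
      ring
    rw [e]
    have := hlt i (by omega)
    refine ⟨by linarith, by linarith, fun _ => by linarith⟩

/-- The indicator matrix of agreement on the first `k` coordinates. -/
noncomputable def agr (r : ℕ) (a : ℕ → ℕ) (k : ℕ) :
    Matrix ((i : Fin r) → Fin (a ((i : ℕ) + 1))) ((i : Fin r) → Fin (a ((i : ℕ) + 1))) ℝ :=
  Matrix.of fun u v => if (∀ j : Fin r, (j : ℕ) < k → u j = v j) then 1 else 0

theorem agr_card (r : ℕ) (a : ℕ → ℕ) (k : ℕ) (u : (i : Fin r) → Fin (a ((i : ℕ) + 1))) :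
    ((Finset.univ.filter fun v : (i : Fin r) → Fin (a ((i : ℕ) + 1)) =>
      ∀ j : Fin r, (j : ℕ) < k → v j = u j).card : ℤ) = gam a r (k + 1) := by
  have : (Finset.univ.filter fun v : (i : Fin r) → Fin (a ((i : ℕ) + 1)) =>
      ∀ j : Fin r, (j : ℕ) < k → v j = u j) =
      Fintype.piFinset fun j : Fin r => if (j : ℕ) < k then {u j} else Finset.univ := by
    ext v
    simp only [Finset.mem_filter, Finset.mem_univ, true_and, Fintype.mem_piFinset]
    refine forall_congr' fun j => ?_
    split_ifs with h <;> simp [h]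
  rw [this, Fintype.card_piFinset]
  have e : ∀ j : Fin r, (if (j : ℕ) < k then ({u j} : Finset _) else Finset.univ).card =
      (fun n : ℕ => if n < k then 1 else a (n + 1)) j := by
    intro j
    by_cases h : (j : ℕ) < k <;> simp [h]
  rw [Finset.prod_congr rfl fun j _ => e j,
    Fin.prod_univ_eq_prod_range (fun n : ℕ => if n < k then 1 else a (n + 1)) r]
  unfold gam
  push_cast
  simp only [← not_le (a := k)]
  simp only [ite_not]
  rw [← Finset.prod_filter]
  refine Finset.prod_bij (fun n _ => n + 1) ?_ ?_ ?_ ?_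
  · intro n hn; simp at hn ⊢; omega
  · intro n _ m _ h; omega
  · intro n hn; simp at hn; exact ⟨n - 1, by simp; omega, by omega⟩
  · intro n _; rfl

theorem agr_mul (r : ℕ) (a : ℕ → ℕ) (k l : ℕ) (hkl : k ≤ l) :
    agr r a k * agr r a l = (gam a r (l + 1) : ℝ) • agr r a k := by
  ext u w
  rw [Matrix.mul_apply]
  simp only [agr, Matrix.of_apply, Matrix.smul_apply, smul_eq_mul]
  rw [← agr_card r a l w]
  have : ∀ v : (i : Fin r) → Fin (a ((i : ℕ) + 1)),
      (if (∀ j : Fin r, (j : ℕ) < k → u j = v j) then (1 : ℝ) else 0) *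
        (if (∀ j : Fin r, (j : ℕ) < l → v j = w j) then 1 else 0) =
      (if (∀ j : Fin r, (j : ℕ) < l → v j = w j) then 1 else 0) *
        (if (∀ j : Fin r, (j : ℕ) < k → u j = w j) then (1 : ℝ) else 0) := by
    intro v
    by_cases h : ∀ j : Fin r, (j : ℕ) < l → v j = w j
    · have : (∀ j : Fin r, (j : ℕ) < k → u j = v j) ↔ ∀ j : Fin r, (j : ℕ) < k → u j = w j := by
        refine forall_congr' fun j => ?_
        constructor
        · intro h' hj; rw [h' hj, h j (by omega)]
        · intro h' hj; rw [h' hj, h j (by omega)]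
      simp only [this, if_pos h, mul_one, one_mul]
    · simp only [if_neg h, mul_zero, zero_mul]
  rw [Finset.sum_congr rfl fun v _ => this v, ← Finset.sum_mul]
  congr 1
  simp

theorem agr_transpose (r : ℕ) (a : ℕ → ℕ) (k : ℕ) : (agr r a k).transpose = agr r a k := by
  ext u v
  simp only [agr, Matrix.transpose_apply, Matrix.of_apply]
  simp only [eq_comm]

theorem agr_mul' (r : ℕ) (a : ℕ → ℕ) (k l : ℕ) (hkl : k ≤ l) :
    agr r a l * agr r a k = (gam a r (l + 1) : ℝ) • agr r a k := by
  have := congrArg Matrix.transpose (agr_mul r a k l hkl)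
  rwa [Matrix.transpose_mul, Matrix.transpose_smul, agr_transpose, agr_transpose] at this

theorem agr_last (r : ℕ) (a : ℕ → ℕ) : agr r a r = 1 := by
  ext u v
  simp only [agr, Matrix.of_apply, Matrix.one_apply]
  congr 1
  simp [funext_iff]

theorem agr_trace (r : ℕ) (a : ℕ → ℕ) (k : ℕ) :
    (agr r a k).trace = ∏ j ∈ Finset.Icc 1 r, (a j : ℝ) := by
  simp only [agr, Matrix.trace, Matrix.diag, Matrix.of_apply]
  simp
  rw [Fin.prod_univ_eq_prod_range (fun n : ℕ => (a (n + 1) : ℝ)) r]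
  refine Finset.prod_bij (fun n _ => n + 1) ?_ ?_ ?_ ?_
  · intro n hn; simp at hn ⊢; omega
  · intro n _ m _ h; omega
  · intro n hn; simp at hn; exact ⟨n - 1, by simp; omega, by omega⟩
  · intro n _; rfl

theorem tele {W : Type*} [AddCommGroup W] [Module ℝ W] (E : ℕ → W) (r : ℕ) :
    ∑ k ∈ Finset.range r, (if Even k then E k - E (k + 1) else 0) =
    ∑ k ∈ Finset.range r, (-1 : ℝ) ^ k • E k - (if Odd r then (1 : ℝ) else 0) • E r := by
  induction r with
  | zero => simp
  | succ n ih =>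
    rw [Finset.sum_range_succ, ih, Finset.sum_range_succ]
    rcases Nat.even_or_odd n with h | h
    · have h' : ¬ Odd n := by simpa using h
      have h'' : Odd (n + 1) := h.add_one
      simp only [if_pos h, if_neg h', if_pos h'', h.neg_one_pow]
      module
    · have h' : ¬ Even n := by simpa using h
      have h'' : ¬ Odd (n + 1) := by simpa using h.add_one
      simp only [if_pos h, if_neg h', if_neg h'', h.neg_one_pow]
      module

theorem adjMat_eq (r : ℕ) (a : ℕ → ℕ) :
    adjMat r a = ∑ k ∈ Finset.range r, (if Even k then agr r a k - agr r a (k + 1) else 0) := by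
  classical
  ext u v
  rw [Matrix.sum_apply]
  simp only [adjMat, Matrix.of_apply]
  by_cases huv : u = v
  · subst huv
    rw [if_neg (SimpleGraph.irrefl _), Finset.sum_eq_zero]
    intro k _
    split_ifs <;> simp [agr]
  · have hex : ∃ m : ℕ, ∃ h : m < r, u ⟨m, h⟩ ≠ v ⟨m, h⟩ := by
      obtain ⟨j, hj⟩ := Function.ne_iff.mp huv
      exact ⟨j, j.2, hj⟩
    obtain ⟨hm, hne⟩ := Nat.find_spec hex
    have hmin : ∀ j : Fin r, (j : ℕ) < Nat.find hex → u j = v j := by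
      intro j hj
      by_contra hc
      exact Nat.find_min hex hj ⟨j.2, hc⟩
    generalize Nat.find hex = m at hm hne hmin
    have hE : ∀ k, agr r a k u v = if k ≤ m then 1 else 0 := by
      intro k
      simp only [agr, Matrix.of_apply]
      congr 1
      apply propext
      constructor
      · intro h
        by_contra hc
        exact hne (h ⟨m, hm⟩ (by simpa using hc))
      · intro h j hj
        exact hmin j (by omega)
    have hadj : (balG r a).Adj u v ↔ Even m := by
      simp only [balG, SimpleGraph.fromRel_adj]
      constructor
      · rintro ⟨-, ⟨i, hi, he, hl⟩ | ⟨i, hi, he, hl⟩⟩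
        · have : (i : ℕ) = m := by
            rcases lt_trichotomy (i : ℕ) m with h | h | h
            · exact absurd (hmin i h) hi
            · exact h
            · exact absurd (hl ⟨m, hm⟩ h) hne
          rwa [← this]
        · have : (i : ℕ) = m := by
            rcases lt_trichotomy (i : ℕ) m with h | h | h
            · exact absurd (hmin i h).symm hi
            · exact h
            · exact absurd (hl ⟨m, hm⟩ h).symm hne
          rwa [← this]
      · intro h
        exact ⟨huv, Or.inl ⟨⟨m, hm⟩, hne, h, hmin⟩⟩
    rw [Finset.sum_eq_single m]
    · by_cases h : Even m
      · rw [if_pos (hadj.mpr h), if_pos h, Matrix.sub_apply, hE, hE]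
        simp
      · rw [if_neg (fun h' => h (hadj.mp h')), if_neg h, Matrix.zero_apply]
    · intro k _ hk
      split_ifs
      · rw [Matrix.sub_apply, hE, hE]
        by_cases h : k ≤ m
        · rw [if_pos h, if_pos (by omega), sub_self]
        · rw [if_neg h, if_neg (by omega), sub_self]
      · rfl
    · intro h
      exact absurd (Finset.mem_range.mpr hm) h

theorem xri_eq (a : ℕ → ℕ) (r i : ℕ) (hi : i ≤ r) :
    (xri a r i : ℝ) = -(∑ k ∈ Finset.Ico i r, (-1 : ℝ) ^ k * (gam a r (k + 1) : ℝ)) +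
      (if Odd r then 1 else 0) := by
  unfold xri
  push_cast
  congr 1
  · rw [← Finset.sum_neg_distrib]
    refine Finset.sum_bij (fun k _ => i + k - 1) ?_ ?_ ?_ ?_
    · intro n hn; simp at hn ⊢; omega
    · intro n hn m hm h; simp at hn hm; omega
    · intro n hn; simp at hn; exact ⟨n + 1 - i, by simp; omega, by omega⟩
    · intro n hn
      simp at hn
      obtain ⟨m, rfl⟩ : ∃ m, n = m + 1 := ⟨n - 1, by omega⟩
      rw [show i + (m + 1) - 1 = i + m by omega, show i + (m + 1) = i + m + 1 by ring]
      rw [pow_add]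
      rcases Nat.even_or_odd i with h | h
      · simp only [if_pos h, h.neg_one_pow]; ring
      · have h' : ¬ Even i := by simpa using h
        simp only [if_neg h', h.neg_one_pow]; ring

theorem prod_split (a : ℕ → ℕ) (r k : ℕ) (hk : k ≤ r) :
    ∏ j ∈ Finset.Icc 1 r, (a j : ℝ) =
      (∏ j ∈ Finset.Icc 1 k, (a j : ℝ)) * (gam a r (k + 1) : ℝ) := by
  unfold gam
  push_cast
  have := Finset.prod_Ico_consecutive (fun j => (a j : ℝ)) (by omega : 1 ≤ k + 1)
    (by omega : k + 1 ≤ r + 1)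
  simpa only [Finset.Ico_add_one_right_eq_Icc] using this.symm

/-- For `r ≥ 2`, `a_i ≥ 2` and `1 ≤ i ≤ r - 1`, the value `-x_r^i` is an eigenvalue of the
cograph with balanced cotree `T_G(a_1,…,a_{r-1},0|0,…,0,a_r)` with multiplicity exactly
`a_1 ⋯ a_{i-1} (a_i - 1)`. -/
theorem multiplicity_xri (r : ℕ) (hr : 2 ≤ r) (a : ℕ → ℕ) (ha : ∀ k, 2 ≤ a k)
    (i : ℕ) (hi1 : 1 ≤ i) (hi2 : i ≤ r - 1) :
    Module.finrank ℝ
        (LinearMap.ker (Matrix.toLin' (adjMat r a + (xri a r i : ℝ) • 1))) =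
      (∏ k ∈ Finset.Icc 1 (i - 1), a k) * (a i - 1) := by
  set g : ℕ → ℝ := fun k => (gam a r (k + 1) : ℝ) with hg
  have hpos : ∀ k, 0 < g k := fun k => by
    simp only [hg]; exact_mod_cast gam_pos a ha r (k + 1)
  have hlt : ∀ k < r, g (k + 1) < g k := fun k hk => by
    have h1 := gam_step a r k hk
    have h2 := gam_pos a ha r (k + 2)
    have h3 : (2 : ℤ) ≤ a (k + 1) := by exact_mod_cast ha (k + 1)
    have : gam a r (k + 2) < gam a r (k + 1) := by nlinarith
    simp only [hg]
    exact_mod_cast this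
  have hgr : g r = 1 := by simp [hg, gam]
  have hne : ∀ p q, p < q → q ≤ r → ∑ k ∈ Finset.Ico p q, (-1 : ℝ) ^ k * g k ≠ 0 := by
    intro p q hpq hq h0
    have := (alt_bound g r hpos hlt (q - p) p (by omega)).2.2 (by omega)
    rw [show p + (q - p) = q by omega, h0] at this
    simp at this
  set P : ℕ → Matrix _ _ ℝ := fun n => Nat.casesOn n 0 (fun k => (g k)⁻¹ • agr r a k) with hP
  have hPs : ∀ k, P (k + 1) = (g k)⁻¹ • agr r a k := fun k => rfl
  have hP0 : P 0 = 0 := rfl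
  set c : ℕ → ℝ := fun k => if k < r then (-1) ^ k * g k else
    (xri a r i : ℝ) - (if Odd r then 1 else 0) with hc
  have hsum : ∀ j ≤ r, ∑ k ∈ Finset.Ico j (r + 1), c k =
      ∑ k ∈ Finset.Ico j r, (-1 : ℝ) ^ k * g k - ∑ k ∈ Finset.Ico i r, (-1 : ℝ) ^ k * g k := by
    intro j hj
    rw [Finset.sum_Ico_succ_top hj]
    have : ∑ k ∈ Finset.Ico j r, c k = ∑ k ∈ Finset.Ico j r, (-1 : ℝ) ^ k * g k := by
      refine Finset.sum_congr rfl fun k hk => ?_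
      simp only [hc, if_pos (Finset.mem_Ico.mp hk).2]
    rw [this]
    simp only [hc, lt_irrefl, if_false]
    rw [xri_eq a r i (by omega)]
    ring
  have key := ker_chain r P ?_ hP0 ?_ c (adjMat r a + (xri a r i : ℝ) • 1) ?_ i (by omega) ?_ ?_
  · obtain ⟨m, rfl⟩ : ∃ m, i = m + 1 := ⟨i - 1, by omega⟩
    have hT : ∀ k ≤ r, (P (k + 1)).trace = ∏ j ∈ Finset.Icc 1 k, (a j : ℝ) := by
      intro k hk
      rw [hPs, Matrix.trace_smul, agr_trace, prod_split a r k hk, smul_eq_mul]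
      have := (hpos k).ne'
      change (g k)⁻¹ * (_ * g k) = _
      field_simp
    rw [hT _ (by omega), hT _ (by omega), Finset.prod_Icc_succ_top (by omega)] at key
    have h1 : 1 ≤ a (m + 1) := le_trans (by norm_num) (ha _)
    have : (Module.finrank ℝ
        (LinearMap.ker (Matrix.toLin' (adjMat r a + (xri a r (m + 1) : ℝ) • 1))) : ℝ) =
      ((∏ k ∈ Finset.Icc 1 (m + 1 - 1), a k) * (a (m + 1) - 1) : ℕ) := by
      rw [key]
      push_cast [h1]
      ring
    exact_mod_cast this
  · intro k l hk hl
    rcases k with _ | k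
    · simp [hP0]
    rcases l with _ | l
    · simp [hP0]
    rcases le_total k l with h | h
    · rw [min_eq_left (by omega), hPs, hPs, Matrix.smul_mul, Matrix.mul_smul, agr_mul r a k l h]
      change _ • _ • (g l) • _ = _
      rw [inv_smul_smul₀ (hpos l).ne']
    · rw [min_eq_right (by omega), hPs, hPs, Matrix.smul_mul, Matrix.mul_smul, agr_mul' r a l k h,
        smul_comm (g k)⁻¹]
      change _ • _ • (g k) • _ = _
      rw [inv_smul_smul₀ (hpos k).ne']
  · rw [hPs, hgr, agr_last]; simp
  · rw [adjMat_eq, tele, Finset.sum_range_succ]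
    have : ∀ k ∈ Finset.range r, c k • P (k + 1) = (-1 : ℝ) ^ k • agr r a k := by
      intro k hk
      simp only [hc, if_pos (Finset.mem_range.mp hk)]
      rw [hPs, mul_smul, smul_inv_smul₀ (hpos k).ne']
    rw [Finset.sum_congr rfl this, hPs, hgr, agr_last]
    simp only [hc, lt_irrefl, if_false]
    rw [inv_one, one_smul, sub_smul]
    abel
  · rw [hsum i (by omega), sub_self]
  · intro j hj hji
    rw [hsum j hj]
    rcases lt_or_gt_of_ne hji with h | h
    · rw [← Finset.sum_Ico_consecutive _ h.le (by omega : i ≤ r), add_sub_cancel_right]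
      exact hne j i h (by omega)
    · rw [← Finset.sum_Ico_consecutive _ h.le hj, sub_add_cancel_right]
      exact neg_ne_zero.mpr (hne i j h hj)
end

section
/- Let r ≥ 2 and let a_1, …, a_r be integers with a_i ≥ 2 for all i, and let A be the real adjacency matrix of G(a_1,…,a_r). Define λ := Σ_{i=1}^{r−1} a_1⋯a_{i−1}(a_i − 1)·x_r^i + ε, where ε = a_1⋯a_{r−1}(a_r − 1) if r is odd and ε = 0 if r is even. Then λ is an eigenvalue of G(a_1,…,a_r), i.e. ker(A − λI) ≠ {0}. (λ is the one remaining eigenvalue, obtained from the vanishing of the trace of A, after the eigenvalues −x_r^i with multiplicity a_1⋯a_{i−1}(a_i−1) for 1 ≤ i ≤ r−1 and the eigenvalue −1 (r odd) or 0 (r even) with multiplicity a_1⋯a_{r−1}(a_r−1) are accounted for.) -/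
open Finset in
theorem aux_xri (a : ℕ → ℕ) (r i : ℕ) (hi : i ≤ r) :
    xri a r i = (∑ j ∈ range r, gam a r (j + 1) * (-1) ^ (j + 1))
      - (∑ j ∈ range i, gam a r (j + 1) * (-1) ^ (j + 1)) + (if Odd r then 1 else 0) := by
  obtain ⟨n, rfl⟩ := Nat.exists_eq_add_of_le hi
  unfold xri
  rw [sum_range_add, add_sub_cancel_left, Nat.add_sub_cancel_left, add_left_inj,
    ← Finset.Ico_add_one_right_eq_Icc, Finset.sum_Ico_eq_sum_range]
  apply Finset.sum_congr (by simp)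
  intro k _
  have h1 : i + (1 + k) = i + k + 1 := by ring
  rw [h1]
  congr 1
  split_ifs with h
  · rw [show i + k + 1 = i + (1 + k) by ring, pow_add _ i, h.neg_one_pow, one_mul]
  · rw [Nat.not_even_iff_odd] at h
    rw [show i + k + 1 = i + (1 + k) by ring, pow_add _ i, h.neg_one_pow, pow_succ]
    ring

open Finset in
theorem aux_abel (a : ℕ → ℕ) (ha : ∀ k, 2 ≤ a k) (r m : ℕ) (hm : m ≤ r) :
    (∑ i ∈ Icc 1 m, (((∏ k ∈ Icc 1 (i - 1), a k) * (a i - 1) : ℕ) : ℤ) * xri a r i)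
      = ((∏ k ∈ Icc 1 m, a k : ℕ) : ℤ) * xri a r m - xri a r 0
        - (if Odd m then gam a r 1 else 0) := by
  induction m with
  | zero => simp
  | succ m ih =>
    rw [Finset.sum_Icc_succ_top (by omega), ih (by omega), Finset.prod_Icc_succ_top (by omega)]
    have hx : xri a r m = gam a r (m + 1) * (-1) ^ (m + 1) + xri a r (m + 1) := by
      rw [aux_xri a r m (by omega), aux_xri a r (m + 1) hm, sum_range_succ _ m]
      ring
    have hg : gam a r 1 = ((∏ k ∈ Icc 1 m, a k : ℕ) : ℤ) * gam a r (m + 1) := by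
      unfold gam
      push_cast
      rw [← Finset.Ico_add_one_right_eq_Icc, ← Finset.Ico_add_one_right_eq_Icc,
        ← Finset.Ico_add_one_right_eq_Icc, Finset.prod_Ico_consecutive _ (by omega) (by omega)]
    have h1 : ((a (m + 1) - 1 : ℕ) : ℤ) = (a (m + 1) : ℤ) - 1 := by
      have := ha (m + 1)
      omega
    rw [Nat.add_sub_cancel, hx, hg, Nat.cast_mul, Nat.cast_mul, h1]
    rcases Nat.even_or_odd m with h | h
    · have h2 : Odd (m + 1) := h.add_one
      rw [if_neg (Nat.not_odd_iff_even.2 h), if_pos h2, h2.neg_one_pow]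
      ring
    · have h2 : Even (m + 1) := h.add_one
      rw [if_neg (Nat.not_odd_iff_even.2 h2), if_pos h, h2.neg_one_pow]
      ring

open Finset in
theorem aux_lambda (r : ℕ) (hr : 2 ≤ r) (a : ℕ → ℕ) (ha : ∀ k, 2 ≤ a k) :
    ((∑ i ∈ Finset.Icc 1 (r - 1),
          (((∏ k ∈ Finset.Icc 1 (i - 1), a k) * (a i - 1) : ℕ) : ℤ) * xri a r i) +
        (if Odd r then (((∏ k ∈ Finset.Icc 1 (r - 1), a k) * (a r - 1) : ℕ) : ℤ) else 0) : ℤ)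
      = - xri a r 0 := by
  have h := aux_abel a ha r r le_rfl
  have hx : xri a r r = if Odd r then 1 else 0 := by
    rw [aux_xri a r r le_rfl]; ring
  have hg : ((∏ k ∈ Icc 1 r, a k : ℕ) : ℤ) = gam a r 1 := by
    unfold gam; push_cast; rfl
  obtain ⟨n, rfl⟩ : ∃ n, r = n + 1 := ⟨r - 1, by omega⟩
  rw [Finset.sum_Icc_succ_top (by omega), hx, hg] at h
  rw [Nat.add_sub_cancel] at h ⊢
  split_ifs at h ⊢ <;> linarith

open Finset in
theorem aux_deg (g : ℕ → ℤ) (m : ℕ) :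
    (∑ i ∈ range m, if Even i then g (i + 1) - g (i + 2) else 0)
      = - (∑ j ∈ range m, g (j + 1) * (-1) ^ (j + 1)) - if Odd m then g (m + 1) else 0 := by
  induction m with
  | zero => simp
  | succ m ih =>
    rw [sum_range_succ, sum_range_succ, ih]
    rcases Nat.even_or_odd m with h | h
    · have h2 : Odd (m + 1) := h.add_one
      rw [if_neg (Nat.not_odd_iff_even.2 h), if_pos h2, h2.neg_one_pow, if_pos h]
      ring
    · have h2 : Even (m + 1) := h.add_one
      rw [if_neg (Nat.not_odd_iff_even.2 h2), if_pos h, h2.neg_one_pow,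
        if_neg (Nat.not_even_iff_odd.2 h)]
      ring

open scoped Classical in
theorem aux_count (r : ℕ) (a : ℕ → ℕ) (u : (i : Fin r) → Fin (a ((i : ℕ) + 1))) (i : ℕ) :
    (∑ v : (i : Fin r) → Fin (a ((i : ℕ) + 1)),
      if (∀ j : Fin r, (j : ℕ) < i → u j = v j) then (1 : ℤ) else 0) = gam a r (i + 1) := by
  have h : ∀ v : (i : Fin r) → Fin (a ((i : ℕ) + 1)),
      (if (∀ j : Fin r, (j : ℕ) < i → u j = v j) then (1 : ℤ) else 0)
        = ∏ j : Fin r, if ((j : ℕ) < i → u j = v j) then (1 : ℤ) else 0 := by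
    intro v
    rw [Finset.prod_ite_zero]
    simp
  simp_rw [h]
  have h2 := Finset.prod_univ_sum (fun j : Fin r => (Finset.univ : Finset (Fin (a ((j : ℕ) + 1)))))
    (fun j x => if ((j : ℕ) < i → u j = x) then (1 : ℤ) else 0)
  rw [Fintype.piFinset_univ] at h2
  rw [← h2]
  have h3 : ∀ j : Fin r, (∑ x : Fin (a ((j : ℕ) + 1)),
      if ((j : ℕ) < i → u j = x) then (1 : ℤ) else 0)
        = (fun j : ℕ => if j < i then (1 : ℤ) else (a (j + 1) : ℤ)) j := by
    intro j
    by_cases hj : (j : ℕ) < i <;> simp [hj]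
  rw [Finset.prod_congr rfl (fun j _ => h3 j),
    Fin.prod_univ_eq_prod_range (fun j : ℕ => if j < i then (1 : ℤ) else (a (j + 1) : ℤ)) r]
  unfold gam
  rw [Finset.prod_ite, Finset.prod_const_one, one_mul]
  refine Finset.prod_bij (fun j _ => j + 1) ?_ ?_ ?_ ?_
  · intro j hj
    simp at hj ⊢
    omega
  · intro x _ y _ h
    omega
  · intro b hb
    simp at hb
    exact ⟨b - 1, by simp; omega, by omega⟩
  · intro j _
    rfl

open scoped Classical in
theorem aux_adj (r : ℕ) (a : ℕ → ℕ) (u v : (i : Fin r) → Fin (a ((i : ℕ) + 1))) :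
    (if (balG r a).Adj u v then (1 : ℤ) else 0) = ∑ i ∈ Finset.range r, if Even i then
      (if (∀ j : Fin r, (j : ℕ) < i → u j = v j) then (1 : ℤ) else 0)
      - (if (∀ j : Fin r, (j : ℕ) < i + 1 → u j = v j) then (1 : ℤ) else 0) else 0 := by
  by_cases huv : u = v
  · subst huv
    simp
  have hex : ∃ i : ℕ, ∃ h : i < r, u ⟨i, h⟩ ≠ v ⟨i, h⟩ := by
    by_contra hc
    push Not at hc
    exact huv (funext fun j => hc j j.2)
  obtain ⟨i0, ⟨h0, hne⟩, hmin⟩ : ∃ i : ℕ, (∃ h : i < r, u ⟨i, h⟩ ≠ v ⟨i, h⟩) ∧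
      ∀ j : Fin r, (j : ℕ) < i → u j = v j := by
    refine ⟨Nat.find hex, Nat.find_spec hex, fun j hj => ?_⟩
    have := Nat.find_min hex hj
    push Not at this
    exact this j.2
  have hE : ∀ i : ℕ, (∀ j : Fin r, (j : ℕ) < i → u j = v j) ↔ i ≤ i0 := by
    intro i
    constructor
    · intro h
      by_contra hc
      exact hne (h ⟨i0, h0⟩ (by simpa using hc))
    · intro h j hj
      exact hmin j (by omega)
  have hA : (balG r a).Adj u v ↔ Even i0 := by
    unfold balG
    rw [SimpleGraph.fromRel_adj]
    constructor
    · rintro ⟨_, ⟨i, hi, he, hl⟩ | ⟨i, hi, he, hl⟩⟩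
      · have h1 := (hE i).1 hl
        have h2 : ¬ (i : ℕ) < i0 := fun h => hi (hmin i h)
        rwa [show i0 = (i : ℕ) by omega]
      · have h1 := (hE i).1 (fun j hj => (hl j hj).symm)
        have h2 : ¬ (i : ℕ) < i0 := fun h => hi (hmin i h).symm
        rwa [show i0 = (i : ℕ) by omega]
    · intro h
      exact ⟨huv, Or.inl ⟨⟨i0, h0⟩, hne, h, hmin⟩⟩
  simp only [hE, hA]
  rw [Finset.sum_eq_single i0]
  · simp
  · intro b _ hb
    by_cases h : b ≤ i0
    · have h' : b + 1 ≤ i0 := by omega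
      simp [h, h']
    · have h' : ¬ b + 1 ≤ i0 := by omega
      simp [h, h']
  · intro h
    simp at h
    omega

open scoped Classical in
theorem aux_row (r : ℕ) (a : ℕ → ℕ) (u : (i : Fin r) → Fin (a ((i : ℕ) + 1))) :
    (∑ v, if (balG r a).Adj u v then (1 : ℤ) else 0) = - xri a r 0 := by
  simp_rw [aux_adj]
  rw [Finset.sum_comm]
  have h : ∀ i ∈ Finset.range r, (∑ v : (i : Fin r) → Fin (a ((i : ℕ) + 1)), if Even i then
      (if (∀ j : Fin r, (j : ℕ) < i → u j = v j) then (1 : ℤ) else 0)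
      - (if (∀ j : Fin r, (j : ℕ) < i + 1 → u j = v j) then (1 : ℤ) else 0) else 0)
      = if Even i then gam a r (i + 1) - gam a r (i + 2) else 0 := by
    intro i _
    split_ifs with hi
    · rw [Finset.sum_sub_distrib, aux_count, aux_count]
    · simp
  rw [Finset.sum_congr rfl h, aux_deg (gam a r) r, aux_xri a r 0 (by omega)]
  have : gam a r (r + 1) = 1 := by simp [gam]
  rw [this, Finset.sum_range_zero]
  ring

/-- The remaining eigenvalue `λ = ∑_{i=1}^{r-1} a_1⋯a_{i-1}(a_i - 1) x_r^i + ε`,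
with `ε = a_1⋯a_{r-1}(a_r - 1)` if `r` is odd and `ε = 0` if `r` is even, is an
eigenvalue of the cograph with balanced cotree `T_G(a_1,…,a_{r-1},0|0,…,0,a_r)`. -/
theorem remaining_eigenvalue (r : ℕ) (hr : 2 ≤ r) (a : ℕ → ℕ) (ha : ∀ k, 2 ≤ a k) :
    LinearMap.ker (Matrix.toLin' (adjMat r a -
      (((∑ i ∈ Finset.Icc 1 (r - 1),
          (((∏ k ∈ Finset.Icc 1 (i - 1), a k) * (a i - 1) : ℕ) : ℤ) * xri a r i) +
        (if Odd r then (((∏ k ∈ Finset.Icc 1 (r - 1), a k) * (a r - 1) : ℕ) : ℤ) else 0) : ℤ)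
        : ℝ) • 1)) ≠ ⊥ := by
  rw [aux_lambda r hr a ha]
  rw [Submodule.ne_bot_iff]
  refine ⟨fun _ => 1, ?_, ?_⟩
  · rw [LinearMap.mem_ker, Matrix.toLin'_apply, Matrix.sub_mulVec, Matrix.smul_mulVec,
      Matrix.one_mulVec, sub_eq_zero]
    funext u
    have h := congrArg (Int.cast : ℤ → ℝ) (aux_row r a u)
    rw [← h]
    simp [Matrix.mulVec, dotProduct, adjMat]
  · intro h
    have h1 := congrFun h (fun i => ⟨0, by have := ha ((i : ℕ) + 1); omega⟩)
    simp at h1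
end

section
/- Let r ≥ 2 and let a_1, …, a_r be integers with a_i ≥ 2 for all i. The characteristic polynomial of the integer adjacency matrix of G(a_1,…,a_r) equals (X − λ) · (X − ε)^{a_1⋯a_{r−1}(a_r−1)} · Π_{i=1}^{r−1} (X + x_r^i)^{a_1⋯a_{i−1}(a_i−1)}, where ε = −1 if r is odd, ε = 0 if r is even, and λ := Σ_{i=1}^{r−1} a_1⋯a_{i−1}(a_i − 1)·x_r^i + (a_1⋯a_{r−1}(a_r − 1) if r is odd, 0 if r is even). In other words, the spectrum of G(a_1,…,a_r) consists of the integers −x_r^i with multiplicity a_1⋯a_{i−1}(a_i−1) for 1 ≤ i ≤ r−1, the integer ε with multiplicity a_1⋯a_{r−1}(a_r−1), and the simple eigenvalue λ. -/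
open scoped Classical in
/-- The integer adjacency matrix of `balG r a`. -/
noncomputable def adjMatZ (r : ℕ) (a : ℕ → ℕ) :
    Matrix ((i : Fin r) → Fin (a ((i : ℕ) + 1))) ((i : Fin r) → Fin (a ((i : ℕ) + 1))) ℤ :=
  Matrix.of fun u v => if (balG r a).Adj u v then 1 else 0

/-- General weighted first-difference matrix. -/
def wMat (a : ℕ → ℕ) : (r : ℕ) → (w : ℕ → ℤ) → (d : ℤ) →
    Matrix ((i : Fin r) → Fin (a ((i : ℕ) + 1))) ((i : Fin r) → Fin (a ((i : ℕ) + 1))) ℤ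
  | 0, _, d => Matrix.of fun _ _ => d
  | r + 1, w, d => Matrix.of fun u v =>
      if (fun i : Fin r => u i.castSucc) = (fun i : Fin r => v i.castSucc) then
        (if u (Fin.last r) = v (Fin.last r) then d else w (r + 1))
      else wMat a r w d (fun i : Fin r => u i.castSucc) (fun i : Fin r => v i.castSucc)

lemma wMat_succ (a : ℕ → ℕ) (r : ℕ) (w : ℕ → ℤ) (d : ℤ) (u v) : wMat a (r + 1) w d u v =
      if (fun i : Fin r => u i.castSucc) = (fun i : Fin r => v i.castSucc) then
        (if u (Fin.last r) = v (Fin.last r) then d else w (r + 1))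
      else wMat a r w d (fun i : Fin r => u i.castSucc) (fun i : Fin r => v i.castSucc) := rfl

lemma wMat_diag (a : ℕ → ℕ) (r : ℕ) (w : ℕ → ℤ) (d : ℤ) (u) : wMat a r w d u u = d := by
  cases r <;> simp [wMat]

lemma wMat_off (a : ℕ → ℕ) (r : ℕ) (w : ℕ → ℤ) (d d' : ℤ) (u v) (h : u ≠ v) :
    wMat a r w d u v = wMat a r w d' u v := by
  induction r with
  | zero => exact absurd (Subsingleton.elim u v) h
  | succ r ih =>
    rw [wMat_succ, wMat_succ]
    split_ifs with h1 h2
    · exfalso; apply h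
      funext i
      refine Fin.lastCases h2 (fun j => ?_) i
      exact congrFun h1 j
    · rfl
    · exact ih _ _ h1

lemma wMat_smul (a : ℕ → ℕ) (r : ℕ) (w : ℕ → ℤ) (d c : ℤ) (u v) :
    c * wMat a r w d u v = wMat a r (fun k => c * w k) (c * d) u v := by
  induction r with
  | zero => rfl
  | succ r ih =>
    simp only [wMat_succ, ← ih]
    split_ifs <;> rfl

/-- The eigenvalues. -/
def theta (a : ℕ → ℕ) (r : ℕ) (w : ℕ → ℤ) (d : ℤ) (i : ℕ) : ℤ :=
  d - w r + ∑ k ∈ Finset.Ioc i r, gam a r k * (w k - w (k - 1))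

lemma gam_succ (a : ℕ → ℕ) (r k : ℕ) (h : k ≤ r + 1) :
    gam a (r + 1) k = a (r + 1) * gam a r k := by
  unfold gam
  rw [Finset.prod_Icc_succ_top h, mul_comm]

lemma gam_self (a : ℕ → ℕ) (r : ℕ) : gam a r r = a r := by simp [gam]

lemma theta_top (a : ℕ → ℕ) (r : ℕ) (w : ℕ → ℤ) (d : ℤ) : theta a r w d r = d - w r := by
  simp [theta]

lemma theta_succ (a : ℕ → ℕ) (r : ℕ) (w : ℕ → ℤ) (d : ℤ) (i : ℕ) (h : i ≤ r) :
    theta a (r + 1) w d i =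
      theta a r (fun k => a (r + 1) * w k) (a (r + 1) * w (r + 1)) i + (d - w (r + 1)) := by
  unfold theta
  rw [Finset.sum_Ioc_succ_top h, gam_self]
  have : ∑ k ∈ Finset.Ioc i r, gam a (r + 1) k * (w k - w (k - 1)) =
      ∑ k ∈ Finset.Ioc i r, gam a r k * (a (r + 1) * w k - a (r + 1) * w (k - 1)) := by
    refine Finset.sum_congr rfl fun k hk => ?_
    rw [gam_succ _ _ _ (by have := (Finset.mem_Ioc.1 hk).2; omega)]
    ring
  rw [this]
  simp only [Nat.add_sub_cancel]
  ring

/-- Multiplicities. -/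
def mlt (a : ℕ → ℕ) (i : ℕ) : ℕ := (∏ k ∈ Finset.Icc 1 (i - 1), a k) * (a i - 1)

lemma mlt_sum (a : ℕ → ℕ) (ha : ∀ k, 2 ≤ a k) (r : ℕ) :
    1 + ∑ i ∈ Finset.Icc 1 r, (mlt a i : ℤ) = ∏ k ∈ Finset.Icc 1 r, (a k : ℤ) := by
  induction r with
  | zero => simp
  | succ r ih =>
    rw [Finset.sum_Icc_succ_top (by omega), Finset.prod_Icc_succ_top (by omega), ← add_assoc, ih]
    have := ha (r + 1)
    simp only [mlt, Nat.add_sub_cancel]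
    push_cast [Nat.cast_sub (show 1 ≤ a (r + 1) by omega)]
    ring

lemma theta_trace (a : ℕ → ℕ) (ha : ∀ k, 2 ≤ a k) (r : ℕ) : ∀ (w : ℕ → ℤ) (_ : w 0 = 0) (d : ℤ),
    theta a r w d 0 + ∑ i ∈ Finset.Icc 1 r, (mlt a i : ℤ) * theta a r w d i =
      (∏ k ∈ Finset.Icc 1 r, (a k : ℤ)) * d := by
  induction r with
  | zero => intro w hw d; simp [theta, hw]
  | succ r ih =>
    intro w hw d
    have h1 : ∑ i ∈ Finset.Icc 1 r, (mlt a i : ℤ) * theta a (r + 1) w d i =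
        ∑ i ∈ Finset.Icc 1 r, (mlt a i : ℤ) *
          theta a r (fun k => a (r + 1) * w k) (a (r + 1) * w (r + 1)) i +
        (∑ i ∈ Finset.Icc 1 r, (mlt a i : ℤ)) * (d - w (r + 1)) := by
      rw [Finset.sum_mul, ← Finset.sum_add_distrib]
      refine Finset.sum_congr rfl fun i hi => ?_
      rw [theta_succ _ _ _ _ _ (Finset.mem_Icc.1 hi).2]
      ring
    rw [Finset.sum_Icc_succ_top (by omega), Finset.prod_Icc_succ_top (by omega), h1,
      theta_succ _ _ _ _ _ (Nat.zero_le r), theta_top]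
    have h2 := ih (fun k => a (r + 1) * w k) (by simp [hw]) (a (r + 1) * w (r + 1))
    have h3 := mlt_sum a ha r
    have h4 : (mlt a (r + 1) : ℤ) = (∏ k ∈ Finset.Icc 1 r, (a k : ℤ)) * (a (r + 1) - 1) := by
      have := ha (r + 1)
      simp only [mlt, Nat.add_sub_cancel]
      push_cast [Nat.cast_sub (show 1 ≤ a (r + 1) by omega)]
      ring
    rw [h4]
    linear_combination h2 + (d - w (r + 1)) * h3

lemma theta_xri (a : ℕ → ℕ) (r i : ℕ) (h : i ≤ r) :
    theta a r (fun k => if Odd k then 1 else 0) 0 i = - xri a r i := by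
  unfold theta xri
  have : ∑ k ∈ Finset.Ioc i r, gam a r k *
      ((if Odd k then (1 : ℤ) else 0) - (if Odd (k - 1) then 1 else 0)) =
      - ∑ k ∈ Finset.Icc 1 (r - i), gam a r (i + k) * (-1) ^ (if Even i then k else k + 1) := by
    rw [← Finset.sum_neg_distrib]
    symm
    refine Finset.sum_bij (fun k _ => i + k) ?_ ?_ ?_ ?_
    · intro k hk; simp at hk ⊢; omega
    · intro k _ l _ h; simpa using h
    · intro k hk; simp at hk
      exact ⟨k - i, by simp; omega, by omega⟩
    · intro k hk
      simp at hk
      obtain ⟨k, rfl⟩ : ∃ m, k = m + 1 := ⟨k - 1, by omega⟩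
      rw [← mul_neg]
      congr 1
      have e : i + (k + 1) - 1 = i + k := by omega
      rw [e]
      have p1 : (if Odd (i + (k + 1)) then (1 : ℤ) else 0) = if Odd (i + k) then 0 else 1 := by
        rw [← add_assoc]
        by_cases ho : Odd (i + k)
        · rw [if_pos ho, if_neg (Nat.not_odd_iff_even.2 (Odd.add_one ho))]
        · rw [if_neg ho, if_pos (Even.add_one (Nat.not_odd_iff_even.1 ho))]
      rw [p1]
      rcases Nat.even_or_odd i with hi | hi
      · rw [if_pos hi]
        rcases Nat.even_or_odd k with hk' | hk'
        · rw [if_neg (Nat.not_odd_iff_even.2 (hi.add hk')),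
            if_neg (Nat.not_odd_iff_even.2 (hi.add hk')), hk'.add_one.neg_one_pow]
          norm_num
        · rw [if_pos (hi.add_odd hk'), if_pos (hi.add_odd hk'), hk'.add_one.neg_one_pow]
          norm_num
      · rw [if_neg (Nat.not_even_iff_odd.2 hi)]
        rcases Nat.even_or_odd k with hk' | hk'
        · rw [if_pos (hi.add_even hk'), if_pos (hi.add_even hk'),
            hk'.add_one.add_one.neg_one_pow]
          norm_num
        · rw [if_neg (Nat.not_odd_iff_even.2 (hi.add_odd hk')),
            if_neg (Nat.not_odd_iff_even.2 (hi.add_odd hk')), hk'.add_one.add_one.neg_one_pow]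
          norm_num
  rw [this]
  ring

open Polynomial in
lemma charpoly_add_smul_one {n : Type*} [Fintype n] [DecidableEq n] (M : Matrix n n ℤ) (c : ℤ) :
    (c • (1 : Matrix n n ℤ) + M).charpoly = M.charpoly.comp (X - C c) := by
  have h := Matrix.charpoly_sub_scalar M (-c)
  rw [C_neg, ← sub_eq_add_neg] at h
  rw [← h]
  congr 1
  ext i j
  by_cases hij : i = j
  · subst hij; simp; ring
  · simp; ring

lemma wMat_adj (r : ℕ) (a : ℕ → ℕ) :
    adjMatZ r a = wMat a r (fun k => if Odd k then 1 else 0) 0 := by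
  classical
  ext u v
  simp only [adjMatZ, Matrix.of_apply]
  induction r with
  | zero => simp [wMat, Subsingleton.elim u v]
  | succ r ih =>
    rw [wMat_succ]
    rw [← ih]
    clear ih
    have key : (balG (r + 1) a).Adj u v ↔
      if (fun i : Fin r => u i.castSucc) = (fun i : Fin r => v i.castSucc) then
        u (Fin.last r) ≠ v (Fin.last r) ∧ Odd (r + 1)
      else (balG r a).Adj (fun i : Fin r => u i.castSucc) (fun i : Fin r => v i.castSucc) := by
      simp only [balG, SimpleGraph.fromRel_adj]
      split_ifs with h
      · have hj : ∀ j : Fin r, u j.castSucc = v j.castSucc := fun j => congrFun h j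
        constructor
        · rintro ⟨_, ⟨i, h1, h2, _⟩ | ⟨i, h1, h2, _⟩⟩ <;> revert h1 h2 <;>
            refine Fin.lastCases ?_ (fun j => ?_) i <;> intro h1 h2
          · exact ⟨h1, Even.add_one h2⟩
          · exact absurd (hj j) h1
          · exact ⟨h1.symm, Even.add_one h2⟩
          · exact absurd (hj j).symm h1
        · rintro ⟨h1, h2⟩
          refine ⟨fun e => h1 (by rw [e]), Or.inl ⟨Fin.last r, h1, ?_, ?_⟩⟩
          · simpa [parity_simps] using h2
          · intro j
            refine Fin.lastCases ?_ (fun j => ?_) j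
            · intro h; simp at h
            · intro _; exact hj j
      · have hne : u ≠ v := fun e => h (by rw [e])
        have aux : ∀ u v : (i : Fin (r + 1)) → Fin (a ((i : ℕ) + 1)),
            (fun i : Fin r => u i.castSucc) ≠ (fun i : Fin r => v i.castSucc) →
            ((∃ i : Fin (r + 1), u i ≠ v i ∧ Even (i : ℕ) ∧
                ∀ j : Fin (r + 1), (j : ℕ) < (i : ℕ) → u j = v j) ↔
              ∃ i : Fin r, u i.castSucc ≠ v i.castSucc ∧ Even (i : ℕ) ∧
                ∀ j : Fin r, (j : ℕ) < (i : ℕ) → u j.castSucc = v j.castSucc) := by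
          intro u v h
          constructor
          · rintro ⟨i, h1, h2, h3⟩
            revert h1 h2 h3
            refine Fin.lastCases ?_ (fun k => ?_) i <;> intro h1 h2 h3
            · exact absurd (funext fun j => h3 j.castSucc (by simp)) h
            · exact ⟨k, h1, h2, fun j hj => h3 j.castSucc hj⟩
          · rintro ⟨i, h1, h2, h3⟩
            refine ⟨i.castSucc, h1, h2, fun j hj => ?_⟩
            have hj' : (j : ℕ) < r := lt_trans hj i.2
            exact h3 ⟨j, hj'⟩ hj
        rw [aux u v h, aux v u (Ne.symm h)]
        exact ⟨fun x => ⟨h, x.2⟩, fun x => ⟨hne, x.2⟩⟩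
    by_cases h : (fun i : Fin r => u i.castSucc) = (fun i : Fin r => v i.castSucc)
    · rw [if_pos h] at key ⊢
      simp only [key]
      split_ifs <;> simp_all
    · rw [if_neg h] at key ⊢
      simp only [key]

lemma sum_init (a : ℕ → ℕ) (r : ℕ) (f : ((i : Fin r) → Fin (a ((i : ℕ) + 1))) → ℤ) :
    ∑ u : (i : Fin (r + 1)) → Fin (a ((i : ℕ) + 1)), f (fun i : Fin r => u i.castSucc) =
      a (r + 1) * ∑ u, f u := by
  rw [← (Fin.snocEquiv (fun i : Fin (r + 1) => Fin (a ((i : ℕ) + 1)))).sum_comp,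
    Fintype.sum_prod_type]
  have : ∀ (x : Fin (a ((Fin.last r : ℕ) + 1)))
      (y : (i : Fin r) → Fin (a ((i.castSucc : ℕ) + 1))),
      (fun i : Fin r => (Fin.snocEquiv (fun i : Fin (r + 1) => Fin (a ((i : ℕ) + 1)))) (x, y)
        i.castSucc) = y := by
    intro x y
    funext i
    simp [Fin.snocEquiv]
  refine (Finset.sum_congr rfl fun x _ => Finset.sum_congr rfl fun y _ =>
    congrArg f (this x y)).trans ?_
  rw [Finset.sum_const, Finset.card_univ, Fintype.card_fin, nsmul_eq_mul]
  rfl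

lemma card_tuples (a : ℕ → ℕ) (r : ℕ) :
    Fintype.card ((i : Fin r) → Fin (a ((i : ℕ) + 1))) = ∏ k ∈ Finset.Icc 1 r, a k := by
  rw [Fintype.card_pi]
  simp only [Fintype.card_fin]
  rw [Fin.prod_univ_eq_prod_range (fun i => a (i + 1)) r]
  induction r with
  | zero => simp
  | succ r ih => rw [Finset.prod_range_succ, ih, Finset.prod_Icc_succ_top (by omega)]

open Polynomial in
lemma wMat_charpoly_succ (a : ℕ → ℕ) (ha : ∀ k, 2 ≤ a k) (r : ℕ) (w : ℕ → ℤ) (d : ℤ) :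
    (wMat a (r + 1) w d).charpoly =
      (X ^ (mlt a (r + 1)) * (wMat a r (fun k => a (r + 1) * w k)
        (a (r + 1) * w (r + 1))).charpoly).comp (X - C (d - w (r + 1))) := by
  let U : Matrix ((i : Fin (r + 1)) → Fin (a ((i : ℕ) + 1))) ((i : Fin r) → Fin (a ((i : ℕ) + 1))) ℤ :=
    Matrix.of fun u v => if v = (fun i : Fin r => u i.castSucc) then 1 else 0
  let V : Matrix ((i : Fin r) → Fin (a ((i : ℕ) + 1))) ((i : Fin (r + 1)) → Fin (a ((i : ℕ) + 1))) ℤ :=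
    Matrix.of fun v u => wMat a r w (w (r + 1)) v (fun i : Fin r => u i.castSucc)
  have h1 : wMat a (r + 1) w d = (d - w (r + 1)) • (1 : Matrix _ _ ℤ) + U * V := by
    ext u v
    simp only [Matrix.add_apply, Matrix.smul_apply, Matrix.mul_apply, U, V, Matrix.of_apply, wMat_succ, ite_mul, one_mul,
      zero_mul, Finset.sum_ite_eq', Finset.sum_ite_eq, Finset.mem_univ, if_true, smul_eq_mul,
      Matrix.one_apply]
    by_cases h : (fun i : Fin r => u i.castSucc) = (fun i : Fin r => v i.castSucc)
    · rw [if_pos h, h, wMat_diag]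
      by_cases h' : u (Fin.last r) = v (Fin.last r)
      · have : u = v := by
          funext i
          refine Fin.lastCases h' (fun j => ?_) i
          exact congrFun h j
        simp [this]
      · have : u ≠ v := fun e => h' (by rw [e])
        simp [this, h']
    · have : u ≠ v := fun e => h (by rw [e])
      rw [if_neg h, if_neg this, wMat_off _ _ _ _ (w (r + 1)) _ _ h]
      simp
  have h2 : V * U = wMat a r (fun k => a (r + 1) * w k) (a (r + 1) * w (r + 1)) := by
    ext u v
    rw [Matrix.mul_apply, ← wMat_smul]
    have := sum_init a r (fun z => wMat a r w (w (r + 1)) u z * if v = z then 1 else 0)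
    simp only [U, V, Matrix.of_apply]
    rw [this]
    simp
  rw [h1, charpoly_add_smul_one, ← h2]
  congr 1
  have := ha (r + 1)
  have c1 : Fintype.card ((i : Fin r) → Fin (a ((i : ℕ) + 1))) = ∏ k ∈ Finset.Icc 1 r, a k :=
    card_tuples a r
  have c2 : Fintype.card ((i : Fin (r + 1)) → Fin (a ((i : ℕ) + 1))) =
      (∏ k ∈ Finset.Icc 1 r, a k) * a (r + 1) := by
    rw [card_tuples a (r + 1), Finset.prod_Icc_succ_top (by omega)]
  rw [Matrix.charpoly_mul_comm_of_le U V, c1, c2]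
  · simp only [mlt, Nat.add_sub_cancel, Nat.mul_sub, mul_one]
  · rw [c1, c2]
    exact Nat.le_mul_of_pos_right _ (by omega)

open Polynomial in
lemma wMat_charpoly (a : ℕ → ℕ) (ha : ∀ k, 2 ≤ a k) (r : ℕ) :
    ∀ (w : ℕ → ℤ) (_ : w 0 = 0) (d : ℤ), (wMat a r w d).charpoly =
      (X - C (theta a r w d 0)) * ∏ i ∈ Finset.Icc 1 r, (X - C (theta a r w d i)) ^ mlt a i := by
  induction r with
  | zero =>
    intro w hw d
    simp [theta, hw, Matrix.charpoly, Matrix.charmatrix, Matrix.det_unique, wMat, Matrix.map_apply]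
  | succ r ih =>
    intro w hw d
    rw [wMat_charpoly_succ a ha, ih _ (by simp [hw]), Finset.prod_Icc_succ_top (by omega),
      theta_top, theta_succ _ _ _ _ _ (Nat.zero_le r)]
    have : ∏ i ∈ Finset.Icc 1 r, (X - C (theta a (r + 1) w d i)) ^ mlt a i =
      ∏ i ∈ Finset.Icc 1 r, ((X - C (d - w (r + 1))) - C (theta a r (fun k => a (r + 1) * w k) (a (r + 1) * w (r + 1)) i)) ^ mlt a i := by
      refine Finset.prod_congr rfl fun i hi => ?_
      rw [theta_succ _ _ _ _ _ (Finset.mem_Icc.1 hi).2, C_add]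
      congr 1
      ring
    rw [this]
    simp only [mul_comp, pow_comp, X_comp, sub_comp, C_comp, prod_comp, C_add]
    ring

open Polynomial in
/-- The full spectrum of the cograph with balanced cotree `T_G(a_1,…,a_{r-1},0|0,…,0,a_r)`:
its characteristic polynomial is
`(X - λ) (X - ε)^{a_1⋯a_{r-1}(a_r-1)} ∏_{i=1}^{r-1} (X + x_r^i)^{a_1⋯a_{i-1}(a_i-1)}`,
where `ε = -1` if `r` is odd, `ε = 0` if `r` is even, and
`λ = ∑_{i=1}^{r-1} a_1⋯a_{i-1}(a_i-1) x_r^i + (a_1⋯a_{r-1}(a_r-1) if r odd else 0)`. -/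
theorem balanced_cograph_charpoly (r : ℕ) (hr : 2 ≤ r) (a : ℕ → ℕ) (ha : ∀ k, 2 ≤ a k) :
    (adjMatZ r a).charpoly =
      (X - C ((∑ i ∈ Finset.Icc 1 (r - 1),
            (((∏ k ∈ Finset.Icc 1 (i - 1), a k) * (a i - 1) : ℕ) : ℤ) * xri a r i) +
          (if Odd r then (((∏ k ∈ Finset.Icc 1 (r - 1), a k) * (a r - 1) : ℕ) : ℤ) else 0))) *
        (X - C (if Odd r then (-1 : ℤ) else 0)) ^
          ((∏ k ∈ Finset.Icc 1 (r - 1), a k) * (a r - 1)) *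
        ∏ i ∈ Finset.Icc 1 (r - 1),
          (X + C (xri a r i)) ^ ((∏ k ∈ Finset.Icc 1 (i - 1), a k) * (a i - 1)) := by
  rw [wMat_adj, wMat_charpoly a ha _ _ (by simp)]
  obtain ⟨r, rfl⟩ : ∃ s, r = s + 1 := ⟨r - 1, by omega⟩
  have ht := theta_trace a ha (r + 1) (fun k => if Odd k then 1 else 0) (by simp) 0
  rw [Finset.sum_Icc_succ_top (by omega), theta_top] at ht
  rw [Finset.prod_Icc_succ_top (by omega), theta_top]
  simp only [Nat.add_sub_cancel]
  have e1 : ∀ i ∈ Finset.Icc 1 r, theta a (r + 1) (fun k => if Odd k then 1 else 0) 0 i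
      = - xri a (r + 1) i := fun i hi =>
    theta_xri _ _ _ (by have := (Finset.mem_Icc.1 hi).2; omega)
  rw [Finset.sum_congr rfl (fun i hi => by rw [e1 i hi])] at ht
  rw [Finset.prod_congr rfl (fun i hi => by rw [e1 i hi])]
  have e2 : theta a (r + 1) (fun k => if Odd k then 1 else 0) 0 0 =
      (∑ i ∈ Finset.Icc 1 r, (mlt a i : ℤ) * xri a (r + 1) i) +
          (if Odd (r + 1) then (mlt a (r + 1) : ℤ) else 0) := by
    simp only [mul_neg, Finset.sum_neg_distrib] at ht
    split_ifs at ht ⊢ <;> linarith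
  rw [e2]
  have e3 : (0 - if Odd (r + 1) then 1 else 0 : ℤ) = if Odd (r + 1) then -1 else 0 := by
    split_ifs <;> rfl
  simp only [e3, mlt, Nat.add_sub_cancel, C_neg, sub_neg_eq_add]
  ring
end
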